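/- arXiv:2302.03179 — 2 statements merged into one kernel-verified Lean document; each statement's English description precedes it below -/
import Mathlib

section
/- For every positive integer n, the normalizing constant a_n satisfies the two-sided bound √(nπ)/2^n ≤ a_n ≤ √n/2^{n-1}. -/
open Real Filter

/-- Normalizing constant `a_n = 2^n (n!)^2 / (2n)!`. -/
noncomputable def aW (n : ℕ) : ℝ :=
  2 ^ n * (Nat.factorial n : ℝ) ^ 2 / (Nat.factorial (2 * n) : ℝ)

/-- Influence function `I_n(θ) = a_n (1 + cos θ)^n`. -/
noncomputable def influence (n : ℕ) (θ : ℝ) : ℝ := aW n * (1 + Real.cos θ) ^ n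

/-- Sensitivity function `S(θ) = -sin θ`. -/
noncomputable def sens (θ : ℝ) : ℝ := -Real.sin θ

/-!
The square of `2 ^ n * a_n` is `(2 * n + 1) * W n`, where `W n` is the `n`-th partial Wallis
product. Dividing it by `n` gives a sequence that decreases, since its consecutive ratios are
`4 * n * (n + 1) / (2 * n + 1) ^ 2 < 1`, starts at `4` and tends to `2 * (π / 2) = π`. Hence it
lies between `π` and `4`, which are therefore the best possible constants.
-/

open Real.Wallis Topology

/-- The Wallis product normalized to converge to `π` from above, equal to
`(4 ^ n / centralBinom n) ^ 2 / n`. It is meaningful for `n ≥ 1` only: at `n = 0` it has the junk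
value `0`. -/
noncomputable def wallisRatio (n : ℕ) : ℝ :=
  W n * (2 * n + 1) / n

lemma wallisRatio_one : wallisRatio 1 = 4 := by
  norm_num [wallisRatio, W]

lemma wallisRatio_succ {n : ℕ} (hn : n ≠ 0) :
    wallisRatio (n + 1) = 4 * n * (n + 1) / (2 * n + 1) ^ 2 * wallisRatio n := by
  have hn' : (n : ℝ) ≠ 0 := Nat.cast_ne_zero.mpr hn
  rw [wallisRatio, wallisRatio, W_succ]
  push_cast
  field_simp
  ring

lemma wallisRatio_nonneg (n : ℕ) : 0 ≤ wallisRatio n := by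
  have := W_pos n
  unfold wallisRatio
  positivity

lemma antitoneOn_wallisRatio : AntitoneOn wallisRatio (Set.Ici 1) := by
  refine antitoneOn_nat_Ici_of_succ_le fun n hn => ?_
  have ratio_le_one : 4 * (n : ℝ) * (n + 1) / (2 * n + 1) ^ 2 ≤ 1 := by
    rw [div_le_one (by positivity)]
    linarith
  rw [wallisRatio_succ (by omega)]
  exact mul_le_of_le_one_left (wallisRatio_nonneg n) ratio_le_one

lemma tendsto_wallisRatio : Tendsto wallisRatio atTop (𝓝 π) := by
  have tendsto_factor : Tendsto (fun n : ℕ => 2 + 1 / (n : ℝ)) atTop (𝓝 2) := by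
    simpa using tendsto_one_div_atTop_nhds_zero_nat.const_add (2 : ℝ)
  have tendsto_mul : Tendsto (fun n : ℕ => W n * (2 + 1 / (n : ℝ))) atTop (𝓝 π) := by
    simpa using tendsto_W_nhds_pi_div_two.mul tendsto_factor
  refine tendsto_mul.congr' ?_
  filter_upwards [eventually_ne_atTop 0] with n hn
  rw [wallisRatio]
  field_simp

lemma pi_le_wallisRatio {n : ℕ} (hn : 1 ≤ n) : π ≤ wallisRatio n := by
  refine le_of_tendsto tendsto_wallisRatio ?_
  filter_upwards [eventually_ge_atTop n] with m hm
  exact antitoneOn_wallisRatio hn (hn.trans hm) hm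

lemma wallisRatio_le_four {n : ℕ} (hn : 1 ≤ n) : wallisRatio n ≤ 4 :=
  wallisRatio_one ▸ antitoneOn_wallisRatio Set.self_mem_Ici hn hn

lemma aW_pos (n : ℕ) : 0 < aW n := by
  unfold aW
  positivity

lemma sq_aW_mul_two_pow {n : ℕ} (hn : n ≠ 0) : (aW n * 2 ^ n) ^ 2 = n * wallisRatio n := by
  rw [wallisRatio, W_eq_factorial_ratio, aW, mul_comm 4 n, pow_mul]
  field_simp

lemma aW_mul_two_pow {n : ℕ} (hn : n ≠ 0) : aW n * 2 ^ n = √(n * wallisRatio n) := by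
  have := aW_pos n
  rw [← sq_aW_mul_two_pow hn, Real.sqrt_sq (by positivity)]

/-- Two-sided bound `√(nπ)/2^n ≤ a_n ≤ √n/2^(n-1)`. -/
theorem stmt5 (n : ℕ) (hn : 0 < n) :
    Real.sqrt (n * Real.pi) / 2 ^ n ≤ aW n ∧ aW n ≤ Real.sqrt n / 2 ^ (n - 1) := by
  constructor
  · rw [div_le_iff₀ (by positivity), aW_mul_two_pow hn.ne']
    gcongr
    exact pi_le_wallisRatio hn
  · have scaled_le : aW n * 2 ^ n ≤ √n * 2 :=
      calc aW n * 2 ^ n = √(n * wallisRatio n) := aW_mul_two_pow hn.ne'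
        _ ≤ √(n * 2 ^ 2) := by
          gcongr
          linarith [wallisRatio_le_four hn]
        _ = √n * 2 := by rw [Real.sqrt_mul n.cast_nonneg, Real.sqrt_sq zero_le_two]
    rw [le_div_iff₀ (by positivity)]
    rw [← pow_sub_one_mul hn.ne', ← mul_assoc] at scaled_le
    exact le_of_mul_le_mul_right scaled_le two_pos
end

section
/- For every integer n ≥ 2, the following exact identity holds: ∫_{π/2}^{3π/2} (−cos A) · cos^{2n}(A/2) dA = ∫_{−π/2}^{π/2} cos A · cos^{2n}(A/2) dA − (π/(2^n a_n)) · (2n/(n+1)). -/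
open Real Filter

/-! Over a full period `[a, a + 2π]` the half-angle formula `cos A = 2 cos² (A / 2) - 1` turns the
integral of `cos A cos²ⁿ (A / 2)` into `2 (2 Wₙ₊₁ - Wₙ)`, where `Wₙ` is the integral of `cos²ⁿ` over
an interval of length `π`. Wallis' recursion gives `Wₙ₊₁ = (2n + 1) / (2n + 2) Wₙ` and
`Wₙ = π / (2ⁿ aₙ)`, so the integral over the period is `Wₙ · 2n / (n + 1)`; splitting the period at
any point gives the identity. -/

theorem aW_succ (n : ℕ) : aW (n + 1) = (n + 1) / (2 * n + 1) * aW n := by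
  have hfac : ((2 * n).factorial : ℝ) ≠ 0 := by positivity
  simp only [aW, Nat.mul_add_one, Nat.factorial_succ]
  push_cast
  field_simp
  ring

theorem integral_cos_pow_even_succ_add_pi (t : ℝ) (n : ℕ) :
    ∫ x in t..t + π, cos x ^ (2 * (n + 1)) =
      (2 * n + 1) / (2 * n + 2) * ∫ x in t..t + π, cos x ^ (2 * n) := by
  have hboundary : cos (t + π) ^ (2 * n + 1) * sin (t + π) = cos t ^ (2 * n + 1) * sin t := by
    rw [cos_add_pi, sin_add_pi, (odd_two_mul_add_one n).neg_pow, neg_mul_neg]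
  rw [Nat.mul_add_one, integral_cos_pow, hboundary, sub_self, zero_div, zero_add]
  push_cast
  rfl

theorem integral_cos_pow_even_add_pi (t : ℝ) (n : ℕ) :
    ∫ x in t..t + π, cos x ^ (2 * n) = π / (2 ^ n * aW n) := by
  induction n with
  | zero => simp [aW]
  | succ n ih =>
    rw [integral_cos_pow_even_succ_add_pi, ih, aW_succ, pow_succ]
    field_simp

theorem cos_mul_cos_half_pow_even (x : ℝ) (n : ℕ) :
    cos x * cos (x / 2) ^ (2 * n) = 2 * cos (x / 2) ^ (2 * (n + 1)) - cos (x / 2) ^ (2 * n) := by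
  have hcos : cos x = 2 * cos (x / 2) ^ 2 - 1 := by
    rw [← cos_two_mul, mul_div_cancel₀ x two_ne_zero]
  rw [hcos]
  ring

theorem integral_cos_mul_cos_half_pow_even_add_two_pi (a : ℝ) (n : ℕ) :
    ∫ x in a..a + 2 * π, cos x * cos (x / 2) ^ (2 * n) =
      π / (2 ^ n * aW n) * (2 * n / (n + 1)) := by
  have hend : (a + 2 * π) / 2 = a / 2 + π := by ring
  calc ∫ x in a..a + 2 * π, cos x * cos (x / 2) ^ (2 * n)
      = ∫ x in a..a + 2 * π, (2 * cos (x / 2) ^ (2 * (n + 1)) - cos (x / 2) ^ (2 * n)) := by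
        simp only [cos_mul_cos_half_pow_even]
    _ = 2 * ∫ y in a / 2..a / 2 + π, (2 * cos y ^ (2 * (n + 1)) - cos y ^ (2 * n)) := by
        rw [intervalIntegral.integral_comp_div
          (fun y ↦ 2 * cos y ^ (2 * (n + 1)) - cos y ^ (2 * n)) two_ne_zero, hend, smul_eq_mul]
    _ = 2 * (2 * (∫ y in a / 2..a / 2 + π, cos y ^ (2 * (n + 1))) -
          ∫ y in a / 2..a / 2 + π, cos y ^ (2 * n)) := by
        rw [intervalIntegral.integral_sub (Continuous.intervalIntegrable (by fun_prop) _ _)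
          (Continuous.intervalIntegrable (by fun_prop) _ _), intervalIntegral.integral_const_mul]
    _ = π / (2 ^ n * aW n) * (2 * n / (n + 1)) := by
        rw [integral_cos_pow_even_succ_add_pi, integral_cos_pow_even_add_pi]
        field_simp
        ring

theorem stmt17_general (a b : ℝ) (n : ℕ) :
    ∫ x in b..a + 2 * π, -cos x * cos (x / 2) ^ (2 * n) =
      (∫ x in a..b, cos x * cos (x / 2) ^ (2 * n)) -
        π / (2 ^ n * aW n) * (2 * n / (n + 1)) := by
  have hint (c d : ℝ) :
      IntervalIntegrable (fun x ↦ cos x * cos (x / 2) ^ (2 * n)) MeasureTheory.volume c d :=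
    Continuous.intervalIntegrable (by fun_prop) c d
  simp only [neg_mul, intervalIntegral.integral_neg]
  rw [← integral_cos_mul_cos_half_pow_even_add_two_pi a n,
    ← intervalIntegral.integral_add_adjacent_intervals (hint a b) (hint b (a + 2 * π)),
    sub_add_cancel_left]

/-- Exact identity relating the two integrals:
`∫_{π/2}^{3π/2} (−cos A) cos^{2n}(A/2) dA
  = ∫_{−π/2}^{π/2} cos A cos^{2n}(A/2) dA − (π/(2^n a_n)) (2n/(n+1))`. -/
theorem stmt17 (n : ℕ) (hn : 2 ≤ n) :
    (∫ A in (Real.pi / 2)..(3 * Real.pi / 2),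
        (-Real.cos A) * Real.cos (A / 2) ^ (2 * n)) =
      (∫ A in (-(Real.pi / 2))..(Real.pi / 2),
        Real.cos A * Real.cos (A / 2) ^ (2 * n)) -
      (Real.pi / (2 ^ n * aW n)) * (2 * (n : ℝ) / ((n : ℝ) + 1)) := by
  have hend : 3 * π / 2 = -(π / 2) + 2 * π := by ring
  simpa only [hend] using stmt17_general (-(π / 2)) (π / 2) n
end
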